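/- arXiv:1502.06507 — 2 statements merged into one kernel-verified Lean document; each statement's English description precedes it below -/
import Mathlib

section
/- For every real t with 0 < t < 1/2, the limit as t → 0⁺ of the function 𝔍(t) = (ln²(t) − ln(t)·ln(1−t))·Li₂(t) − ln²(1−t)·Li₂(1−t) + ln²(t/(1−t))·Li₂(t/(t−1)) − (1/2)·Li₂(t)² + 2·ln(t)·Li₃(t) + 2·ln(1−t)·Li₃(1−t) − 2·ln(t/(1−t))·Li₃(t/(t−1)) + 2·(Li₄(t) − Li₄(1−t) + Li₄(t/(t−1))) + ln²(1−t)·((1/2)·ln²(t) − ln(t)·ln(1−t) + (1/4)·ln²(1−t)) exists and equals −π⁴/45; that is, 𝔍(t) tends to −π⁴/45 as t tends to 0 from the right. (Here Li₂(1−t) and Li₃(1−t) and Li₄(1−t) are interpreted for 1−t < 1 by the power series, whose values tend to π²/6, ζ(3), and π⁴/90 respectively as t → 0⁺.) -/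
open Real

/-- The polylogarithm `Li s x = ∑_{k=1}^∞ x^k / k^s` for real `x` with `|x| < 1`. -/
noncomputable def Li (s : ℕ) (x : ℝ) : ℝ := ∑' k : ℕ, x ^ (k + 1) / ((k : ℝ) + 1) ^ s

/-- `ζ(3) = ∑_{k=1}^∞ 1/k³`. -/
noncomputable def zeta3 : ℝ := ∑' k : ℕ, 1 / ((k : ℝ) + 1) ^ 3

/- Since `log (t / (1 - t)) = log t - log (1 - t)`, the function is a polynomial in `log t`, namely
`log² t · A t + log t · B t + C t - 2 Li₄ (1 - t)`. The coefficients `A`, `B`, `C` are `O(t)`,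
because `log (1 - t)`, `Liₛ t` and `Liₛ (t / (t - 1))` are `O(t)` while `Liₛ (1 - t)` converges
for `s ≥ 2`. Hence the powers of `log t` are beaten, and only `-2 Li₄ 1 = -2 ζ(4) = -π⁴ / 45`
survives. -/

open Filter Topology Asymptotics

lemma isBigO_mul_of_tendsto {α 𝕜 : Type*} [NormedDivisionRing 𝕜] {l : Filter α}
    {f g h : α → 𝕜} {c : 𝕜} (hf : f =O[l] g) (hh : Tendsto h l (𝓝 c)) :
    (fun x => f x * h x) =O[l] g := by
  simpa only [mul_one] using hf.mul (hh.isBigO_one 𝕜)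

lemma isBigO_id_of_differentiableAt_zero {𝕜 E F : Type*} [NontriviallyNormedField 𝕜]
    [NormedAddCommGroup E] [NormedSpace 𝕜 E] [NormedAddCommGroup F] [NormedSpace 𝕜 F]
    {f : E → F} (hf : DifferentiableAt 𝕜 f 0) (hf₀ : f 0 = 0) : f =O[𝓝 0] (id : E → E) := by
  simpa only [hf₀, sub_zero] using! hf.isBigO_sub

lemma isBigO_log_one_sub : (fun t => log (1 - t)) =O[𝓝 0] id :=
  isBigO_id_of_differentiableAt_zero (𝕜 := ℝ) (by fun_prop (disch := norm_num)) (by simp)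

lemma tendsto_log_one_sub : Tendsto (fun t => log (1 - t)) (𝓝 0) (𝓝 0) :=
  isBigO_log_one_sub.trans_tendsto tendsto_id

lemma isBigO_div_sub_one : (fun t : ℝ => t / (t - 1)) =O[𝓝 0] id :=
  isBigO_id_of_differentiableAt_zero (𝕜 := ℝ) (by fun_prop (disch := norm_num)) (by simp)

lemma tendsto_log_pow_mul_of_isBigO_rpow {f : ℝ → ℝ} {r : ℝ} (hr : 0 < r) (n : ℕ)
    (hf : f =O[𝓝[>] 0] fun t => t ^ r) :
    Tendsto (fun t => log t ^ n * f t) (𝓝[>] 0) (𝓝 0) := by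
  have hlog : (fun t => log t ^ n) =o[𝓝[>] 0] fun t => t ^ (-r) :=
    isLittleO_norm_left.1 <| by
      simpa only [norm_pow, norm_eq_abs, rpow_natCast] using
        isLittleO_abs_log_rpow_rpow_nhdsGT_zero (n : ℝ) (neg_neg_of_pos hr)
  refine (isLittleO_one_iff ℝ).1 <| (hlog.mul_isBigO hf).congr' .rfl ?_
  filter_upwards [self_mem_nhdsWithin] with t (ht : 0 < t)
  rw [← rpow_add ht, neg_add_cancel, rpow_zero]

lemma tendsto_one_sub_nhdsGT_zero : Tendsto (fun t : ℝ => 1 - t) (𝓝[>] 0) (𝓝[<] 1) := by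
  have hcont : ContinuousWithinAt (fun t : ℝ => 1 - t) (Set.Ioi 0) 0 := by fun_prop
  simpa only [sub_zero] using
    hcont.tendsto_nhdsWithin (t := Set.Iio 1) fun t ht => sub_lt_self 1 ht

lemma norm_Li_le (s : ℕ) {x : ℝ} (hx : ‖x‖ < 1) : ‖Li s x‖ ≤ ‖x‖ / (1 - ‖x‖) := by
  have hgeom : HasSum (fun k => ‖x‖ * ‖x‖ ^ k) (‖x‖ / (1 - ‖x‖)) :=
    (hasSum_geometric_of_lt_one (norm_nonneg x) hx).mul_left ‖x‖
  refine tsum_of_norm_bounded hgeom fun k => ?_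
  rw [norm_div, norm_pow, norm_pow, ← pow_succ']
  refine div_le_self (by positivity) (one_le_pow₀ ?_)
  exact (le_add_of_nonneg_left k.cast_nonneg).trans (le_norm_self _)

lemma isBigO_Li (s : ℕ) : Li s =O[𝓝 0] id := by
  refine IsBigO.of_bound 2 ?_
  filter_upwards [Metric.closedBall_mem_nhds (0 : ℝ) one_half_pos] with x hx
  rw [mem_closedBall_zero_iff] at hx
  calc ‖Li s x‖ ≤ ‖x‖ / (1 - ‖x‖) := norm_Li_le s (by linarith)
    _ ≤ ‖x‖ / (1 / 2) := by gcongr; linarith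
    _ = 2 * ‖id x‖ := by rw [id]; ring

lemma tendsto_Li_nhds_zero (s : ℕ) : Tendsto (Li s) (𝓝 0) (𝓝 0) :=
  (isBigO_Li s).trans_tendsto tendsto_id

lemma isBigO_Li_div_sub_one (s : ℕ) : (fun t => Li s (t / (t - 1))) =O[𝓝 0] id :=
  ((isBigO_Li s).comp_tendsto (isBigO_div_sub_one.trans_tendsto tendsto_id)).trans
    isBigO_div_sub_one

lemma tendsto_Li_div_sub_one (s : ℕ) : Tendsto (fun t => Li s (t / (t - 1))) (𝓝 0) (𝓝 0) :=
  (isBigO_Li_div_sub_one s).trans_tendsto tendsto_id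

lemma continuousOn_Li {s : ℕ} (hs : 2 ≤ s) : ContinuousOn (Li s) (Set.Icc (-1) 1) := by
  have hsum : Summable fun k : ℕ => 1 / ((k : ℝ) + 1) ^ s := by
    exact_mod_cast (summable_nat_add_iff 1).2 (summable_one_div_nat_pow.2 hs)
  refine continuousOn_tsum (fun k => by fun_prop) hsum fun k x hx => ?_
  rw [norm_div, norm_pow, norm_of_nonneg (by positivity : (0 : ℝ) ≤ ((k : ℝ) + 1) ^ s)]
  gcongr
  exact pow_le_one₀ (norm_nonneg x) (abs_le.2 hx)

lemma tendsto_Li_one_sub {s : ℕ} (hs : 2 ≤ s) :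
    Tendsto (fun t => Li s (1 - t)) (𝓝[>] 0) (𝓝 (Li s 1)) := by
  have hleft : ContinuousWithinAt (Li s) (Set.Iio 1) 1 :=
    (continuousOn_Li hs 1 (by simp)).mono_of_mem_nhdsWithin (Icc_mem_nhdsLT (by norm_num))
  exact hleft.tendsto.comp tendsto_one_sub_nhdsGT_zero

lemma Li_four_one : Li 4 1 = π ^ 4 / 90 := by
  simpa [Li] using ((hasSum_nat_add_iff' 1).2 hasSum_zeta_four).tsum_eq

/-- The coefficient of `log² t` in `𝔍 t + 2 Li₄ (1 - t)`, expanded as a polynomial in `log t` by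
`log (t / (1 - t)) = log t - log (1 - t)`. -/
noncomputable def logSqCoeff (t : ℝ) : ℝ :=
  Li 2 t + Li 2 (t / (t - 1)) + log (1 - t) ^ 2 / 2

/-- The coefficient of `log t` in the same expansion as for `logSqCoeff`. -/
noncomputable def logCoeff (t : ℝ) : ℝ :=
  2 * (Li 3 t - Li 3 (t / (t - 1)))
    - log (1 - t) * (Li 2 t + 2 * Li 2 (t / (t - 1)) + log (1 - t) ^ 2)

/-- The term free of `log t` in the same expansion as for `logSqCoeff`. -/
noncomputable def logFreeTerm (t : ℝ) : ℝ :=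
  2 * (Li 4 t + Li 4 (t / (t - 1))) - Li 2 t ^ 2 / 2
    + log (1 - t) * (2 * (Li 3 (1 - t) + Li 3 (t / (t - 1)))
      + log (1 - t) * (Li 2 (t / (t - 1)) - Li 2 (1 - t)) + log (1 - t) ^ 3 / 4)

lemma isBigO_logSqCoeff : logSqCoeff =O[𝓝 0] id := by
  have hsq : (fun t => log (1 - t) ^ 2 / 2) =O[𝓝 0] id :=
    (isBigO_mul_of_tendsto isBigO_log_one_sub (tendsto_log_one_sub.div_const 2)).congr_left
      fun t => by ring
  exact ((isBigO_Li 2).add (isBigO_Li_div_sub_one 2)).add hsq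

lemma isBigO_logCoeff : logCoeff =O[𝓝 0] id := by
  have hfactor := ((tendsto_Li_nhds_zero 2).add ((tendsto_Li_div_sub_one 2).const_mul 2)).add
    (tendsto_log_one_sub.pow 2)
  exact (((isBigO_Li 3).sub (isBigO_Li_div_sub_one 3)).const_mul_left 2).sub
    (isBigO_mul_of_tendsto isBigO_log_one_sub hfactor)

lemma isBigO_logFreeTerm : logFreeTerm =O[𝓝[>] 0] id := by
  have hright : 𝓝[>] (0 : ℝ) ≤ 𝓝 0 := nhdsWithin_le_nhds
  have hLi₄ := ((isBigO_Li 4).add (isBigO_Li_div_sub_one 4)).const_mul_left 2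
  have hLi₂_sq : (fun t => Li 2 t ^ 2 / 2) =O[𝓝 0] id :=
    (isBigO_mul_of_tendsto (isBigO_Li 2) ((tendsto_Li_nhds_zero 2).div_const 2)).congr_left
      fun t => by ring
  have hlog := tendsto_log_one_sub.mono_left hright
  have hLi₂ := ((tendsto_Li_div_sub_one 2).mono_left hright).sub (tendsto_Li_one_sub le_rfl)
  have hLi₃ := ((tendsto_Li_one_sub (Nat.le_succ 2)).add
    ((tendsto_Li_div_sub_one 3).mono_left hright)).const_mul 2
  have hfactor := (hLi₃.add (hlog.mul hLi₂)).add ((hlog.pow 3).div_const 4)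
  exact ((hLi₄.sub hLi₂_sq).mono hright).add
    (isBigO_mul_of_tendsto (isBigO_log_one_sub.mono hright) hfactor)

theorem stmt_3 :
    Filter.Tendsto (fun t : ℝ =>
      (Real.log t ^ 2 - Real.log t * Real.log (1 - t)) * Li 2 t
        - Real.log (1 - t) ^ 2 * Li 2 (1 - t)
        + Real.log (t / (1 - t)) ^ 2 * Li 2 (t / (t - 1))
        - (1 / 2) * (Li 2 t) ^ 2
        + 2 * Real.log t * Li 3 t
        + 2 * Real.log (1 - t) * Li 3 (1 - t)
        - 2 * Real.log (t / (1 - t)) * Li 3 (t / (t - 1))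
        + 2 * (Li 4 t - Li 4 (1 - t) + Li 4 (t / (t - 1)))
        + Real.log (1 - t) ^ 2 * ((1 / 2) * Real.log t ^ 2
            - Real.log t * Real.log (1 - t) + (1 / 4) * Real.log (1 - t) ^ 2))
      (nhdsWithin 0 (Set.Ioo 0 (1 / 2))) (nhds (-π ^ 4 / 45)) := by
  rw [nhdsWithin_Ioo_eq_nhdsGT one_half_pos]
  have hlim {f : ℝ → ℝ} (n : ℕ) (hf : f =O[𝓝[>] 0] id) :=
    tendsto_log_pow_mul_of_isBigO_rpow one_pos n (by simpa only [rpow_one] using! hf)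
  have hlogSq := hlim 2 (isBigO_logSqCoeff.mono nhdsWithin_le_nhds)
  have hlog := hlim 1 (isBigO_logCoeff.mono nhdsWithin_le_nhds)
  have hfree := hlim 0 isBigO_logFreeTerm
  have hLi₄ := (tendsto_Li_one_sub (s := 4) (by norm_num)).const_mul 2
  have hexpansion := ((hlogSq.add hlog).add hfree).sub hLi₄
  rw [Li_four_one, show 0 + 0 + 0 - 2 * (π ^ 4 / 90) = -π ^ 4 / 45 by ring] at hexpansion
  refine hexpansion.congr' ?_
  filter_upwards [Ioo_mem_nhdsGT one_pos] with t ⟨ht₀, ht₁⟩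
  rw [log_div ht₀.ne' (sub_pos.2 ht₁).ne', logSqCoeff, logCoeff, logFreeTerm]
  ring
end

section
/- For every real z with -1 < z < 1, the function 𝓘₃(z) = 6·(1+z)·( 2·Li₃((1+z)/2) + π²/6 − 1 − 2·ζ(3) − (Li₂((1+z)/2) + π²/6 − 1)·ln((1+z)/2) ) + 6·(1−z)·( Li₂((1+z)/2) + ln((1−z)/2)·ln((1+z)/2) ) has derivative 𝓘₃′(z) = 12·Li₃((1+z)/2) − 6·ln((1+z)/2)·Li₂((1+z)/2) − π²·ln((1+z)/2) − 12·ζ(3). -/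
open Real

/-!
With `w = (1 + z) / 2`, the claimed derivative is a linear combination of `Li₃ w`, `log w * Li₂ w`,
`log w` and `1`. Termwise differentiation gives `(w * Liₛ₊₁ w)' = Liₛ₊₁ w + Liₛ w`, so an
antiderivative of `Liₛ₊₁` is obtained from one of `Liₛ`, starting from `Li₁ w = -log (1 - w)`;
the product `log w * Li₂ w` is then integrated by parts.
-/

theorem Li_one {x : ℝ} (hx : |x| < 1) : Li 1 x = -log (1 - x) := by
  simpa only [Li, pow_one] using (hasSum_pow_div_log_of_abs_lt_one hx).tsum_eq

theorem mul_tsum_pow_div_eq_Li (s : ℕ) (x : ℝ) :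
    x * ∑' k : ℕ, x ^ k / ((k : ℝ) + 1) ^ s = Li s x := by
  simp only [Li, ← tsum_mul_left, pow_succ', mul_div_assoc]

theorem hasDerivAt_pow_succ_div_pow_succ (s k : ℕ) (x : ℝ) :
    HasDerivAt (fun y : ℝ => y ^ (k + 1) / ((k : ℝ) + 1) ^ (s + 1))
      (x ^ k / ((k : ℝ) + 1) ^ s) x := by
  have hk : (k : ℝ) + 1 ≠ 0 := by positivity
  refine ((hasDerivAt_pow (k + 1) x).div_const _).congr_deriv ?_
  rw [Nat.add_sub_cancel, Nat.cast_succ, pow_succ', mul_div_mul_left _ _ hk]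

theorem norm_pow_div_pow_le (s k : ℕ) (x : ℝ) :
    ‖x ^ k / ((k : ℝ) + 1) ^ s‖ ≤ |x| ^ k := by
  have hk : 1 ≤ ((k : ℝ) + 1) ^ s := one_le_pow₀ (le_add_of_nonneg_left k.cast_nonneg)
  rw [norm_div, norm_pow, norm_eq_abs, norm_of_nonneg (zero_le_one.trans hk)]
  exact div_le_self (by positivity) hk

theorem hasDerivAt_Li_succ_tsum (s : ℕ) {x : ℝ} (hx : |x| < 1) :
    HasDerivAt (Li (s + 1)) (∑' k : ℕ, x ^ k / ((k : ℝ) + 1) ^ s) x := by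
  obtain ⟨r, hxr, hr1⟩ := exists_between hx
  have hr0 : 0 < r := (abs_nonneg x).trans_lt hxr
  have hbound (k : ℕ) (y : ℝ) (hy : y ∈ Metric.ball 0 r) :
      ‖y ^ k / ((k : ℝ) + 1) ^ s‖ ≤ r ^ k :=
    (norm_pow_div_pow_le s k y).trans <|
      pow_le_pow_left₀ (abs_nonneg y) (mem_ball_zero_iff.1 hy).le k
  exact hasDerivAt_tsum_of_isPreconnected (summable_geometric_of_lt_one hr0.le hr1)
    Metric.isOpen_ball (convex_ball 0 r).isPreconnected
    (fun k y _ => hasDerivAt_pow_succ_div_pow_succ s k y) hbound (Metric.mem_ball_self hr0)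
    (by simp) (mem_ball_zero_iff.2 hxr)

theorem hasDerivAt_Li_succ (s : ℕ) {x : ℝ} (hx : |x| < 1) (hx0 : x ≠ 0) :
    HasDerivAt (Li (s + 1)) (Li s x / x) x := by
  rw [← mul_tsum_pow_div_eq_Li, mul_div_cancel_left₀ _ hx0]
  exact hasDerivAt_Li_succ_tsum s hx

theorem hasDerivAt_mul_Li_succ (s : ℕ) {x : ℝ} (hx : |x| < 1) :
    HasDerivAt (fun y => y * Li (s + 1) y) (Li (s + 1) x + Li s x) x := by
  refine ((hasDerivAt_id x).mul (hasDerivAt_Li_succ_tsum s hx)).congr_deriv ?_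
  rw [one_mul, id_eq, mul_tsum_pow_div_eq_Li]

theorem hasDerivAt_antideriv_Li_one {x : ℝ} (hx : |x| < 1) :
    HasDerivAt (fun y => (1 - y) * log (1 - y) + y) (Li 1 x) x := by
  have hx1 : 1 - x ≠ 0 := (sub_pos.2 (abs_lt.1 hx).2).ne'
  refine (((hasDerivAt_mul_log hx1).comp_const_sub 1 x).add (hasDerivAt_id x)).congr_deriv ?_
  rw [Li_one hx]
  ring

theorem hasDerivAt_antideriv_Li_succ {F : ℝ → ℝ} {s : ℕ} {x : ℝ} (hF : HasDerivAt F (Li s x) x)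
    (hx : |x| < 1) : HasDerivAt (fun y => y * Li (s + 1) y - F y) (Li (s + 1) x) x :=
  ((hasDerivAt_mul_Li_succ s hx).sub hF).congr_deriv (add_sub_cancel_right _ _)

theorem hasDerivAt_antideriv_Li_two {x : ℝ} (hx : |x| < 1) :
    HasDerivAt (fun y => y * Li 2 y - ((1 - y) * log (1 - y) + y)) (Li 2 x) x :=
  hasDerivAt_antideriv_Li_succ (hasDerivAt_antideriv_Li_one hx) hx

theorem hasDerivAt_antideriv_Li_three {x : ℝ} (hx : |x| < 1) :
    HasDerivAt (fun y => y * Li 3 y - (y * Li 2 y - ((1 - y) * log (1 - y) + y))) (Li 3 x) x :=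
  hasDerivAt_antideriv_Li_succ (hasDerivAt_antideriv_Li_two hx) hx

theorem hasDerivAt_antideriv_log {x : ℝ} (hx : x ≠ 0) :
    HasDerivAt (fun y => y * log y - y) (log x) x :=
  ((hasDerivAt_mul_log hx).sub (hasDerivAt_id x)).congr_deriv (add_sub_cancel_right _ _)

theorem hasDerivAt_antideriv_log_mul_Li_two {x : ℝ} (hx : |x| < 1) (hx0 : x ≠ 0) :
    HasDerivAt
      (fun y => log y * (y * Li 2 y - ((1 - y) * log (1 - y) + y))
        - (y * Li 2 y - 2 * ((1 - y) * log (1 - y) + y) + Li 2 y - y))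
      (log x * Li 2 x) x := by
  have hLi1 := hasDerivAt_antideriv_Li_one hx
  have hparts := (hasDerivAt_log hx0).mul (hasDerivAt_antideriv_Li_two hx)
  -- Since `Li 1 x = -log (1 - x)`, the antiderivative of `Li 2` divided by `x` is
  -- `Li 2 x - Li 1 x + Li 1 x / x - 1`, the integrand left over by the parts formula.
  have hremainder := (((hasDerivAt_mul_Li_succ 1 hx).sub (hLi1.const_mul 2)).add
    (hasDerivAt_Li_succ 1 hx hx0)).sub (hasDerivAt_id x)
  refine (hparts.sub hremainder).congr_deriv ?_
  rw [Li_one hx]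
  field_simp
  ring

theorem stmt_8 (z : ℝ) (h1 : -1 < z) (h2 : z < 1) :
    HasDerivAt (fun z : ℝ =>
      6 * (1 + z) * (2 * Li 3 ((1 + z) / 2) + π ^ 2 / 6 - 1 - 2 * zeta3
          - (Li 2 ((1 + z) / 2) + π ^ 2 / 6 - 1) * Real.log ((1 + z) / 2))
        + 6 * (1 - z) * (Li 2 ((1 + z) / 2) + Real.log ((1 - z) / 2) * Real.log ((1 + z) / 2)))
      (12 * Li 3 ((1 + z) / 2) - 6 * Real.log ((1 + z) / 2) * Li 2 ((1 + z) / 2)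
        - π ^ 2 * Real.log ((1 + z) / 2) - 12 * zeta3) z := by
  have hpos : 0 < (1 + z) / 2 := by linarith
  have hlt : |(1 + z) / 2| < 1 := by
    rw [abs_of_pos hpos]
    linarith
  have hw : HasDerivAt (fun y : ℝ => (1 + y) / 2) (1 / 2) z :=
    ((hasDerivAt_id z).const_add 1).div_const 2
  have hLi3 := (hasDerivAt_antideriv_Li_three hlt).const_mul 24
  have hlogLi2 := (hasDerivAt_antideriv_log_mul_Li_two hlt hpos.ne').const_mul 12
  have hlog := (hasDerivAt_antideriv_log hpos.ne').const_mul (2 * π ^ 2)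
  have hconst := (hasDerivAt_id ((1 + z) / 2)).const_mul (24 * zeta3)
  have hcomp := (((hLi3.sub hlogLi2).sub hlog).sub hconst).comp z hw
  refine (hcomp.congr_deriv (by ring)).congr_of_eventuallyEq (.of_forall fun y => ?_)
  have hy : 1 - (1 + y) / 2 = (1 - y) / 2 := by ring
  simp only [Function.comp_apply, Pi.sub_apply, id_eq, hy]
  ring
end
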